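/- arXiv:1508.01400 — 2 statements merged into one kernel-verified Lean document; each statement's English description precedes it below -/
import Mathlib

section
/- Let λ₁ ≥ 1, let Ω' ⊂ ℝ² be a simply connected domain, and let φ : 𝔻 → Ω' be a conformal (bijective holomorphic) map from the unit disk. If Q ⊂ 𝔻 is a λ₁-Whitney-type set in 𝔻, then φ(Q) is a λ₂-Whitney-type set in Ω', where λ₂ depends only on λ₁. -/
open Metric

/-- Distance between a set `A` and a set `B` (in the extended sense). -/
noncomputable def setDistE (A B : Set ℂ) : ENNReal := ⨅ a ∈ A, EMetric.infEdist a B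

/-- `A` is a `λ`-Whitney-type set in `Ω`: it is connected, contains a disk of radius
`diam(A)/λ`, and `diam(A)/λ ≤ dist(A, ∂Ω) ≤ λ · diam(A)`. -/
def IsWhitneyTypeE (Ω A : Set ℂ) (lam : ℝ) : Prop :=
  IsConnected A ∧
  (∃ c : ℂ, EMetric.closedBall c (EMetric.diam A / ENNReal.ofReal lam) ⊆ A) ∧
  EMetric.diam A / ENNReal.ofReal lam ≤ setDistE A (frontier Ω) ∧
  setDistE A (frontier Ω) ≤ ENNReal.ofReal lam * EMetric.diam A

/-
If `f` is injective on `U` and omits `w`, a branch of `log (f - w)` is injective modulo `2πi`, so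
Bloch's theorem bounds its derivative at `z` by a constant over the distance from `z` to the
complement of `U`. Applied to `f` and to its inverse, this weak Koebe estimate makes `‖f' z‖` times
that distance comparable to the distance from `f z` to the boundary of the image. It also shows that
`log ‖f - w‖` oscillates by at most a constant on disks of Whitney scale. A Whitney-type set is
connected and covered by a bounded number of such disks, so `‖f - w‖` varies on it by a bounded
factor, uniformly in `w`. Taking `w` on the boundary of the image controls the diameter of the image
set by its distance to that boundary, and the Koebe estimate at the center of the inscribed disk
gives the rest.
-/

open Set Filter Topology MeasureTheory

section Bloch

variable {f : ℂ → ℂ} {c : ℂ} {r : ℝ}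

lemma norm_sub_sub_deriv_mul_le {s : Set ℂ} (hs : Convex ℝ s)
    (hf : ∀ z ∈ s, DifferentiableAt ℂ f z) {a : ℂ} {C : ℝ}
    (hC : ∀ z ∈ s, ‖deriv f z - deriv f a‖ ≤ C) (ha : a ∈ s) {z : ℂ} (hz : z ∈ s) :
    ‖f z - f a - deriv f a * (z - a)‖ ≤ C * ‖z - a‖ := by
  have hder : ∀ x ∈ s, HasDerivWithinAt (fun x ↦ f x - deriv f a * x)
      (deriv f x - deriv f a) s x := fun x hx ↦ by
    simpa using ((hf x hx).hasDerivAt.fun_sub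
      ((hasDerivAt_id' x).const_mul (deriv f a))).hasDerivWithinAt
  calc ‖f z - f a - deriv f a * (z - a)‖
      = ‖f z - deriv f a * z - (f a - deriv f a * a)‖ := by ring_nf
    _ ≤ C * ‖z - a‖ := hs.norm_image_sub_le_of_norm_hasDerivWithin_le hder hC ha hz

lemma ball_subset_image_closedBall_of_norm_deriv_sub_le (hr : 0 < r)
    (hf : ∀ z ∈ closedBall c r, DifferentiableAt ℂ f z) (h0 : deriv f c ≠ 0)
    (hder : ∀ z ∈ closedBall c r, ‖deriv f z - deriv f c‖ ≤ ‖deriv f c‖ / 2) :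
    ball (f c) (r * ‖deriv f c‖ / 4) ⊆ f '' closedBall c r := by
  have hc : c ∈ closedBall c r := mem_closedBall_self hr.le
  have hsphere : ∀ z ∈ sphere c r, r * ‖deriv f c‖ / 2 ≤ ‖f z - f c‖ := fun z hz ↦ by
    have hzc : ‖z - c‖ = r := mem_sphere_iff_norm.mp hz
    have happrox := norm_sub_sub_deriv_mul_le (convex_closedBall c r) hf hder hc
      (sphere_subset_closedBall hz)
    have hlin : ‖deriv f c * (z - c)‖ = ‖deriv f c‖ * r := by rw [norm_mul, hzc]
    rw [hzc] at happrox
    linarith [norm_le_norm_add_norm_sub (f z - f c) (deriv f c * (z - c))]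
  have hcl : DiffContOnCl ℂ f (ball c r) := DifferentiableOn.diffContOnCl fun z hz ↦
    (hf z (closure_ball_subset_closedBall hz)).differentiableWithinAt
  have hne : ∃ᶠ z in 𝓝 c, f z ≠ f c :=
    ((hf c hc).hasDerivAt.eventually_ne h0).frequently.filter_mono nhdsWithin_le_nhds
  convert hcl.ball_subset_image_closedBall hr hsphere hne using 2
  ring

lemma ball_subset_image_ball_of_norm_deriv_le_two_mul (hr : 0 < r)
    (hf : DifferentiableOn ℂ f (ball c r)) (h0 : deriv f c ≠ 0)
    (hder : ∀ z ∈ ball c r, ‖deriv f z‖ ≤ 2 * ‖deriv f c‖) :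
    ball (f c) (r * ‖deriv f c‖ / 24) ⊆ f '' ball c r := by
  have hmaps : MapsTo (deriv f) (ball c r) (closedBall (deriv f c) (3 * ‖deriv f c‖)) :=
    fun z hz ↦ by
      rw [mem_closedBall_iff_norm]
      linarith [norm_sub_le (deriv f z) (deriv f c), hder z hz]
  have hsub : closedBall c (r / 6) ⊆ ball c r := closedBall_subset_ball (by linarith)
  have hschwarz : ∀ z ∈ closedBall c (r / 6), ‖deriv f z - deriv f c‖ ≤ ‖deriv f c‖ / 2 :=
    fun z hz ↦ calc
      ‖deriv f z - deriv f c‖ ≤ 3 * ‖deriv f c‖ / r * dist z c := by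
        rw [← dist_eq_norm]
        exact Complex.dist_le_div_mul_dist_of_mapsTo_ball (hf.deriv isOpen_ball) hmaps (hsub hz)
      _ ≤ 3 * ‖deriv f c‖ / r * (r / 6) := by gcongr; exact hz
      _ = ‖deriv f c‖ / 2 := by field_simp; norm_num
  have himage := ball_subset_image_closedBall_of_norm_deriv_sub_le (by positivity)
    (fun z hz ↦ hf.differentiableAt (isOpen_ball.mem_nhds (hsub hz))) h0 hschwarz
  rw [show r / 6 * ‖deriv f c‖ / 4 = r * ‖deriv f c‖ / 24 by ring] at himage
  exact himage.trans (image_mono hsub)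

/- Landau's trick: `a` maximizes `‖f' z‖ * (r / 2 - dist z c)`, so that `‖f'‖ ≤ 2 * ‖f' a‖` on the
ball about `a` with half the radius allowed there. -/
lemma exists_norm_deriv_le_two_mul (hr : 0 < r) (hf : DifferentiableOn ℂ f (ball c r))
    (h0 : deriv f c ≠ 0) :
    ∃ a s, 0 < s ∧ ball a s ⊆ ball c r ∧ r * ‖deriv f c‖ ≤ 4 * (s * ‖deriv f a‖) ∧
      ∀ z ∈ ball a s, ‖deriv f z‖ ≤ 2 * ‖deriv f a‖ := by
  have hsub : closedBall c (r / 2) ⊆ ball c r := closedBall_subset_ball (by linarith)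
  have hcont : ContinuousOn (fun z ↦ ‖deriv f z‖ * (r / 2 - dist z c)) (closedBall c (r / 2)) :=
    ((hf.deriv isOpen_ball).continuousOn.mono hsub).norm.mul (by fun_prop)
  have hc : c ∈ closedBall c (r / 2) := mem_closedBall_self (by linarith)
  obtain ⟨a, -, hmax⟩ := (isCompact_closedBall c (r / 2)).exists_isMaxOn ⟨c, hc⟩ hcont
  set s := (r / 2 - dist a c) / 2 with hs
  have hmax_s : ∀ z ∈ closedBall c (r / 2),
      ‖deriv f z‖ * (r / 2 - dist z c) ≤ ‖deriv f a‖ * (2 * s) := fun z hz ↦ by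
    rw [hs, mul_div_cancel₀ _ two_ne_zero]
    exact hmax hz
  have hbound : ‖deriv f c‖ * (r / 2) ≤ ‖deriv f a‖ * (2 * s) := by simpa using hmax_s c hc
  have hs0 : 0 < s := by
    have : 0 < ‖deriv f a‖ * (2 * s) := lt_of_lt_of_le (by positivity) hbound
    linarith [pos_of_mul_pos_right this (norm_nonneg _)]
  have hdist : ∀ z ∈ ball a s, s ≤ r / 2 - dist z c := fun z hz ↦ by
    linarith [dist_triangle z a c, mem_ball.mp hz]
  have hin : ball a s ⊆ closedBall c (r / 2) := fun z hz ↦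
    mem_closedBall.mpr (by linarith [hdist z hz])
  refine ⟨a, s, hs0, hin.trans hsub, by linarith, fun z hz ↦ le_of_mul_le_mul_right ?_ hs0⟩
  calc ‖deriv f z‖ * s ≤ ‖deriv f z‖ * (r / 2 - dist z c) := by gcongr; exact hdist z hz
    _ ≤ ‖deriv f a‖ * (2 * s) := hmax_s z (hin hz)
    _ = 2 * ‖deriv f a‖ * s := by ring

theorem exists_ball_subset_image_ball (hr : 0 < r) (hf : DifferentiableOn ℂ f (ball c r)) :
    ∃ p, ball p (r * ‖deriv f c‖ / 96) ⊆ f '' ball c r := by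
  by_cases h0 : deriv f c = 0
  · exact ⟨0, by simp [h0]⟩
  obtain ⟨a, s, hs, hsub, hbound, hder⟩ := exists_norm_deriv_le_two_mul hr hf h0
  have ha : deriv f a ≠ 0 := fun ha ↦ by
    have : 0 < r * ‖deriv f c‖ := by positivity
    simp only [ha, norm_zero, mul_zero] at hbound
    linarith
  refine ⟨f a, (ball_subset_ball ?_).trans <|
    (ball_subset_image_ball_of_norm_deriv_le_two_mul hs (hf.mono hsub) ha hder).trans
      (image_mono hsub)⟩
  linarith

end Bloch

section Koebe

variable {f : ℂ → ℂ} {c w : ℂ} {r : ℝ}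

lemma exists_log_sub (hr : 0 < r) (hf : DifferentiableOn ℂ f (ball c r))
    (hw : w ∉ f '' ball c r) :
    ∃ h : ℂ → ℂ, ∀ z ∈ ball c r,
      HasDerivAt h (deriv f z / (f z - w)) z ∧ Complex.exp (h z) = f z - w := by
  have hne : ∀ z ∈ ball c r, f z - w ≠ 0 := fun z hz hzw ↦ hw ⟨z, hz, sub_eq_zero.mp hzw⟩
  have hfw : DifferentiableOn ℂ (fun z ↦ f z - w) (ball c r) := hf.sub_const w
  have hc := mem_ball_self (x := c) hr
  obtain ⟨h, hhc, hh⟩ :=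
    ((hf.deriv isOpen_ball).div hfw hne).isExactOn_ball.with_val_at c (Complex.log (f c - w))
  have hexp : DifferentiableOn ℂ (fun z ↦ Complex.exp (h z)) (ball c r) := fun z hz ↦
    (hh z hz).differentiableAt.cexp.differentiableWithinAt
  have hlog : EqOn (logDeriv fun z ↦ Complex.exp (h z)) (logDeriv fun z ↦ f z - w) (ball c r) :=
    fun z hz ↦ by
      simp only [logDeriv_apply, (hh z hz).cexp.deriv, deriv_sub_const]
      exact mul_div_cancel_left₀ _ (Complex.exp_ne_zero _)
  obtain ⟨k, -, hk⟩ := (logDeriv_eqOn_iff hexp hfw isOpen_ball (convex_ball c r).isPreconnected hne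
    fun z _ ↦ Complex.exp_ne_zero _).mp hlog
  have hk1 : k = 1 := by
    have := hk hc
    simp only [hhc, Complex.exp_log (hne c hc), Pi.smul_apply, smul_eq_mul] at this
    exact (mul_eq_right₀ (hne c hc)).mp this.symm
  exact ⟨h, fun z hz ↦ ⟨hh z hz, by simpa [hk1] using hk hz⟩⟩

lemma le_two_pi_of_ball_subset_image {h : ℂ → ℂ} {s : Set ℂ} {p : ℂ} {R : ℝ}
    (hinj : InjOn (fun z ↦ Complex.exp (h z)) s) (hR : ball p R ⊆ h '' s) :
    R ≤ 2 * Real.pi := by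
  by_contra! hlt
  obtain ⟨x, hx, hxp⟩ := hR (mem_ball_self (Real.two_pi_pos.trans hlt))
  obtain ⟨y, hy, hyp⟩ : p + 2 * Real.pi * Complex.I ∈ h '' s :=
    hR (by simpa [abs_of_pos Real.pi_pos] using hlt)
  have hxy : x = y := hinj hx hy (by simp only [hxp, hyp, Complex.exp_periodic p])
  rw [hxy, hyp] at hxp
  simp [Real.pi_ne_zero] at hxp

/-- An admissible constant `K` in the Koebe distortion estimate
`r * ‖f' c‖ ≤ K * ‖f c - w‖`, for `f` injective on `ball c r` and omitting `w` there. The sharp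
constant is `4`; this one is `96`, from Bloch's theorem `exists_ball_subset_image_ball`,
times the modulus `2π` of the period of `exp`. -/
noncomputable def koebeConst : ℝ := 192 * Real.pi

lemma koebeConst_pos : 0 < koebeConst := mul_pos (by norm_num) Real.pi_pos

lemma one_le_koebeConst : 1 ≤ koebeConst := by
  rw [koebeConst]
  linarith [Real.pi_gt_three]

/- A branch of `log (f - w)` is injective modulo `2πi`, so its image contains no disk of radius
larger than `2π`, and Bloch's theorem bounds its derivative. -/
theorem mul_norm_deriv_le_koebeConst_mul (hr : 0 < r) (hf : DifferentiableOn ℂ f (ball c r))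
    (hinj : InjOn f (ball c r)) (hw : w ∉ f '' ball c r) :
    r * ‖deriv f c‖ ≤ koebeConst * ‖f c - w‖ := by
  have hc := mem_ball_self (x := c) hr
  have hpos : 0 < ‖f c - w‖ := norm_pos_iff.mpr fun h ↦ hw ⟨c, hc, sub_eq_zero.mp h⟩
  obtain ⟨h, hh⟩ := exists_log_sub hr hf hw
  have hexp_inj : InjOn (fun z ↦ Complex.exp (h z)) (ball c r) := fun x hx y hy hxy ↦ by
    simp only [(hh x hx).2, (hh y hy).2, sub_left_inj] at hxy
    exact hinj hx hy hxy
  obtain ⟨p, hp⟩ := exists_ball_subset_image_ball hr fun z hz ↦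
    (hh z hz).1.differentiableAt.differentiableWithinAt
  have hle := le_two_pi_of_ball_subset_image hexp_inj hp
  rw [(hh c hc).1.deriv, norm_div, div_le_iff₀ (by norm_num), mul_div_assoc', div_le_iff₀ hpos]
    at hle
  rw [koebeConst]
  linarith

theorem ball_subset_image_of_injOn (hr : 0 < r) (hf : DifferentiableOn ℂ f (ball c r))
    (hinj : InjOn f (ball c r)) :
    ball (f c) (r * ‖deriv f c‖ / koebeConst) ⊆ f '' ball c r := fun w hw ↦ by
  by_contra hnot
  have := mul_norm_deriv_le_koebeConst_mul hr hf hinj hnot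
  rw [mem_ball', dist_eq_norm, lt_div_iff₀' koebeConst_pos] at hw
  linarith

end Koebe

section Inverse

variable {f : ℂ → ℂ} {U : Set ℂ}

lemma not_eventually_eq_of_injOn (hU : IsOpen U) (hinj : InjOn f U) {z : ℂ} (hz : z ∈ U) :
    ¬∀ᶠ y in 𝓝 z, f y = f z := fun hconst ↦ by
  have hsingle : ∀ᶠ y in 𝓝[≠] z, y = z := by
    filter_upwards [hconst.filter_mono nhdsWithin_le_nhds,
      mem_nhdsWithin_of_mem_nhds (hU.mem_nhds hz)] with y hy hyU using hinj hyU hz hy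
  obtain ⟨y, hyz, hne⟩ := (hsingle.and self_mem_nhdsWithin).exists
  exact hne hyz

lemma nhds_le_map_nhds_of_injOn (hU : IsOpen U) (hf : DifferentiableOn ℂ f U) (hinj : InjOn f U)
    {z : ℂ} (hz : z ∈ U) : 𝓝 (f z) ≤ map f (𝓝 z) :=
  (hf.analyticAt (hU.mem_nhds hz)).eventually_constant_or_nhds_le_map_nhds.resolve_left
    (not_eventually_eq_of_injOn hU hinj hz)

lemma isOpen_image_of_injOn (hU : IsOpen U) (hf : DifferentiableOn ℂ f U) (hinj : InjOn f U) :
    IsOpen (f '' U) := isOpen_iff_mem_nhds.mpr <| by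
  rintro _ ⟨z, hz, rfl⟩
  exact nhds_le_map_nhds_of_injOn hU hf hinj hz (image_mem_map (hU.mem_nhds hz))

lemma continuousAt_invFunOn (hU : IsOpen U) (hf : DifferentiableOn ℂ f U) (hinj : InjOn f U)
    {z : ℂ} (hz : z ∈ U) : ContinuousAt (Function.invFunOn f U) (f z) := by
  rw [ContinuousAt, hinj.leftInvOn_invFunOn hz]
  refine Tendsto.mono_left ?_ (nhds_le_map_nhds_of_injOn hU hf hinj hz)
  refine tendsto_map'_iff.mpr (tendsto_id.congr' ?_)
  filter_upwards [hU.mem_nhds hz] with x hx using (hinj.leftInvOn_invFunOn hx).symm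

lemma eventually_apply_invFunOn_eq (hU : IsOpen U) (hf : DifferentiableOn ℂ f U)
    (hinj : InjOn f U) {z : ℂ} (hz : z ∈ U) : ∀ᶠ y in 𝓝 (f z), f (Function.invFunOn f U y) = y := by
  filter_upwards [(isOpen_image_of_injOn hU hf hinj).mem_nhds (mem_image_of_mem f hz)] with y hy
    using Function.invFunOn_eq hy

lemma hasDerivAt_invFunOn (hU : IsOpen U) (hf : DifferentiableOn ℂ f U) (hinj : InjOn f U)
    {z : ℂ} (hz : z ∈ U) (h0 : deriv f z ≠ 0) :
    HasDerivAt (Function.invFunOn f U) (deriv f z)⁻¹ (f z) := by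
  have hderiv : HasDerivAt f (deriv f z) (Function.invFunOn f U (f z)) := by
    rw [hinj.leftInvOn_invFunOn hz]
    exact (hf.differentiableAt (hU.mem_nhds hz)).hasDerivAt
  exact hderiv.of_local_left_inverse (continuousAt_invFunOn hU hf hinj hz) h0
    (eventually_apply_invFunOn_eq hU hf hinj hz)

lemma eventually_deriv_ne_zero_of_injOn (hU : IsOpen U) (hf : DifferentiableOn ℂ f U)
    (hinj : InjOn f U) {a : ℂ} (ha : a ∈ U) : ∀ᶠ z in 𝓝[≠] a, deriv f z ≠ 0 := by
  have hderiv : AnalyticAt ℂ (deriv f) a := (hf.analyticAt (hU.mem_nhds ha)).deriv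
  refine hderiv.eventually_eq_zero_or_eventually_ne_zero.resolve_left fun hzero ↦ ?_
  obtain ⟨ε, hε, hball⟩ := Metric.mem_nhds_iff.mp (hzero.and (hU.mem_nhds ha))
  have hconst : ∀ᶠ x in 𝓝 a, f x = f a := by
    filter_upwards [ball_mem_nhds a hε] with x hx
    exact isOpen_ball.is_const_of_deriv_eq_zero (convex_ball a ε).isPreconnected
      (hf.mono fun y hy ↦ (hball hy).2) (fun y hy ↦ (hball hy).1) hx (mem_ball_self hε)
  exact not_eventually_eq_of_injOn hU hinj ha hconst

/- Zeros of `f'` are isolated, so the inverse of `f` is holomorphic off a discrete set; being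
continuous, it is holomorphic there as well, whence `f' ≠ 0` by the chain rule. -/
theorem deriv_ne_zero_of_injOn (hU : IsOpen U) (hf : DifferentiableOn ℂ f U) (hinj : InjOn f U)
    {a : ℂ} (ha : a ∈ U) : deriv f a ≠ 0 := fun h0 ↦ by
  have hpunct : ∀ᶠ y in 𝓝[≠] f a, DifferentiableAt ℂ (Function.invFunOn f U) y := by
    have hne := eventually_nhdsWithin_iff.mp (eventually_deriv_ne_zero_of_injOn hU hf hinj ha)
    refine eventually_nhdsWithin_iff.mpr (nhds_le_map_nhds_of_injOn hU hf hinj ha <|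
      mem_map.mpr ?_)
    filter_upwards [hne, hU.mem_nhds ha] with z hz hzU hza
    exact (hasDerivAt_invFunOn hU hf hinj hzU (hz fun h ↦ hza (congrArg f h))).differentiableAt
  have hdiff : DifferentiableAt ℂ (Function.invFunOn f U) (f a) :=
    (Complex.analyticAt_of_differentiable_on_punctured_nhds_of_continuousAt hpunct
      (continuousAt_invFunOn hU hf hinj ha)).differentiableAt
  have hderiv : HasDerivAt f 0 (Function.invFunOn f U (f a)) := by
    rw [hinj.leftInvOn_invFunOn ha, ← h0]
    exact (hf.differentiableAt (hU.mem_nhds ha)).hasDerivAt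
  exact not_differentiableAt_of_local_left_inverse_hasDerivAt_zero hderiv
    (eventually_apply_invFunOn_eq hU hf hinj ha) hdiff

end Inverse

section Frontier

lemma subset_of_disjoint_frontier {X : Type*} [TopologicalSpace X] {s t : Set X}
    (hs : IsPreconnected s) (hdisj : Disjoint s (frontier t)) (hne : (s ∩ t).Nonempty) : s ⊆ t := by
  have hcover : s ⊆ interior t ∪ (closure t)ᶜ := fun x hx ↦ by
    by_cases hxt : x ∈ closure t
    · exact .inl (by_contra fun hxi ↦ hdisj.le_bot ⟨hx, hxt, hxi⟩)
    · exact .inr hxt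
  obtain ⟨x, hxs, hxt⟩ := hne
  have hxi : x ∈ interior t := (hcover hxs).resolve_right fun h ↦ h (subset_closure hxt)
  have hdisj' : Disjoint (interior t) (closure t)ᶜ :=
    disjoint_compl_right.mono_left (interior_subset.trans subset_closure)
  exact (hs.subset_left_of_subset_union isOpen_interior isClosed_closure.isOpen_compl hdisj' hcover
    ⟨x, hxs, hxi⟩).trans interior_subset

lemma ball_subset_of_le_infEDist_frontier {E : Type*} [SeminormedAddCommGroup E] [NormedSpace ℝ E]
    {V : Set E} {x : E} (hx : x ∈ V) {R : ℝ}
    (hR : ENNReal.ofReal R ≤ infEDist x (frontier V)) : ball x R ⊆ V := by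
  rcases le_or_gt R 0 with hR0 | hR0
  · simp [ball_eq_empty.mpr hR0]
  refine subset_of_disjoint_frontier (convex_ball x R).isPreconnected
    (disjoint_left.mpr fun y hy hyV ↦ ?_) ⟨x, mem_ball_self hR0, hx⟩
  have hle : ENNReal.ofReal R ≤ ENNReal.ofReal (dist x y) :=
    edist_dist x y ▸ hR.trans (infEDist_le_edist_of_mem hyV)
  exact ((ENNReal.ofReal_le_ofReal_iff dist_nonneg).mp hle).not_gt (mem_ball'.mp hy)

lemma exists_mem_frontier_dist_le {E : Type*} [SeminormedAddCommGroup E] [NormedSpace ℝ E]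
    [ProperSpace E] {V : Set E} {x : E} (hx : x ∈ V) {ρ : ℝ} (hρ : 0 ≤ ρ)
    (hball : ∀ R, ball x R ⊆ V → R ≤ ρ) : ∃ y ∈ frontier V, dist x y ≤ ρ := by
  have hinf : infEDist x (frontier V) ≤ ENNReal.ofReal ρ := by
    by_contra! hlt
    obtain ⟨R, -, hρR, hR⟩ := ENNReal.lt_iff_exists_real_btwn.mp hlt
    exact (hball R (ball_subset_of_le_infEDist_frontier hx hR.le)).not_gt
      ((ENNReal.ofReal_lt_ofReal_iff_of_nonneg hρ).mp hρR)
  have hne : (frontier V).Nonempty := nonempty_iff_ne_empty.mpr fun hempty ↦ by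
    simp [hempty] at hinf
  obtain ⟨y, hy, hxy⟩ := isClosed_frontier.exists_infDist_eq_dist hne x
  exact ⟨y, hy, hxy ▸ ENNReal.toReal_le_of_le_ofReal hρ hinf⟩

end Frontier

section Covering

/- The image `u '' S` is an interval, covered by the sets `u '' (S ∩ B i)` of length at most `C`. -/
lemma dist_le_card_mul_of_isPreconnected {X ι : Type*} [TopologicalSpace X] {u : X → ℝ} {S : Set X}
    (hS : IsPreconnected S) (hu : ContinuousOn u S) {t : Finset ι} {B : ι → Set X}
    (hcover : S ⊆ ⋃ i ∈ t, B i) {C : ℝ}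
    (hosc : ∀ i ∈ t, ∀ x ∈ S ∩ B i, ∀ y ∈ S ∩ B i, dist (u x) (u y) ≤ C)
    {x y : X} (hx : x ∈ S) (hy : y ∈ S) : dist (u x) (u y) ≤ t.card * C := by
  have hC : 0 ≤ C := by
    obtain ⟨i, hi, hxi⟩ := mem_iUnion₂.mp (hcover hx)
    simpa using hosc i hi x ⟨hx, hxi⟩ x ⟨hx, hxi⟩
  have hinterval : uIcc (u x) (u y) ⊆ ⋃ i ∈ t, u '' (S ∩ B i) :=
    ((hS.image u hu).ordConnected.uIcc_subset (mem_image_of_mem u hx)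
      (mem_image_of_mem u hy)).trans <| by
      rw [← image_iUnion₂, ← inter_iUnion₂]
      exact image_mono (subset_inter subset_rfl hcover)
  have hpiece : ∀ i ∈ t, volume (u '' (S ∩ B i)) ≤ ENNReal.ofReal C := fun i hi ↦
    (Real.volume_le_diam _).trans <| ediam_le_of_forall_dist_le <| by
      rintro _ ⟨a, ha, rfl⟩ _ ⟨b, hb, rfl⟩
      exact hosc i hi a ha b hb
  have hvolume := calc
    ENNReal.ofReal (dist (u x) (u y)) = volume (uIcc (u x) (u y)) := by
      rw [Real.volume_interval, Real.dist_eq, abs_sub_comm]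
    _ ≤ volume (⋃ i ∈ t, u '' (S ∩ B i)) := measure_mono hinterval
    _ ≤ ∑ i ∈ t, volume (u '' (S ∩ B i)) := measure_biUnion_finset_le t _
    _ ≤ t.card • ENNReal.ofReal C := Finset.sum_le_card_nsmul t _ _ hpiece
    _ = ENNReal.ofReal (t.card * C) := by
      rw [← ENNReal.ofReal_nsmul, nsmul_eq_mul]
  exact (ENNReal.ofReal_le_ofReal_iff (by positivity)).mp hvolume

lemma exists_finset_closedBall_subset {E : Type*} [SeminormedAddCommGroup E] [NormedSpace ℝ E]
    [ProperSpace E] {ε : ℝ} (hε : 0 < ε) :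
    ∃ t : Finset E, ∀ (x : E) (R : ℝ), 0 < R →
      closedBall x R ⊆ ⋃ y ∈ t, closedBall (x + R • y) (R * ε) := by
  obtain ⟨t, -, htfin, ht⟩ := (isCompact_closedBall (0 : E) 1).finite_cover_balls hε
  refine ⟨htfin.toFinset, fun x R hR z hz ↦ ?_⟩
  have hscaled : R⁻¹ • (z - x) ∈ closedBall (0 : E) 1 := by
    rw [mem_closedBall_zero_iff, norm_smul, norm_inv, Real.norm_of_nonneg hR.le,
      inv_mul_le_one₀ hR]
    exact mem_closedBall_iff_norm.mp hz
  obtain ⟨y, hy, hzy⟩ := mem_iUnion₂.mp (ht hscaled)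
  refine mem_iUnion₂.mpr ⟨y, by simpa using hy, mem_closedBall_iff_norm.mpr ?_⟩
  calc ‖z - (x + R • y)‖ = ‖R • (R⁻¹ • (z - x) - y)‖ := by
        rw [smul_sub, smul_inv_smul₀ hR.ne', sub_sub]
    _ = R * ‖R⁻¹ • (z - x) - y‖ := by rw [norm_smul, Real.norm_of_nonneg hR.le]
    _ ≤ R * ε := by gcongr; exact (mem_ball_iff_norm.mp hzy).le

end Covering

section Distortion

variable {f : ℂ → ℂ} {U : Set ℂ} {c w : ℂ} {r : ℝ}

lemma le_koebeConst_mul_of_ball_subset_image (hU : IsOpen U) (hf : DifferentiableOn ℂ f U)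
    (hinj : InjOn f U) (hc : c ∈ U) (hw : w ∉ U) {R : ℝ} (hR : ball (f c) R ⊆ f '' U) :
    R ≤ koebeConst * ‖deriv f c‖ * ‖c - w‖ := by
  rcases le_or_gt R 0 with hR0 | hR0
  · exact hR0.trans (mul_nonneg (mul_nonneg koebeConst_pos.le (norm_nonneg _)) (norm_nonneg _))
  have hne : ∀ z ∈ U, deriv f z ≠ 0 := fun z ↦ deriv_ne_zero_of_injOn hU hf hinj
  have hmem : ∀ y ∈ ball (f c) R, Function.invFunOn f U y ∈ U := fun y hy ↦
    Function.invFunOn_mem (hR hy)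
  have hderiv : ∀ z ∈ U, HasDerivAt (Function.invFunOn f U) (deriv f z)⁻¹ (f z) := fun z hz ↦
    hasDerivAt_invFunOn hU hf hinj hz (hne z hz)
  have hinv_diff : DifferentiableOn ℂ (Function.invFunOn f U) (ball (f c) R) := fun y hy ↦ by
    obtain ⟨z, hz, rfl⟩ := hR hy
    exact (hderiv z hz).differentiableAt.differentiableWithinAt
  have hinv_inj : InjOn (Function.invFunOn f U) (ball (f c) R) :=
    (Function.invFunOn_injOn_image f U).mono hR
  have hkoebe := mul_norm_deriv_le_koebeConst_mul hR0 hinv_diff hinv_inj (w := w) <| by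
    rintro ⟨y, hy, rfl⟩
    exact hw (hmem y hy)
  rw [(hderiv c hc).deriv, hinj.leftInvOn_invFunOn hc, norm_inv, ← div_eq_mul_inv,
    div_le_iff₀ (norm_pos_iff.mpr (hne c hc))] at hkoebe
  linarith

lemma dist_log_norm_sub_le_koebeConst (hr : 0 < r) (hf : DifferentiableOn ℂ f (ball c r))
    (hinj : InjOn f (ball c r)) (hw : w ∉ f '' ball c r) {z : ℂ} (hz : z ∈ closedBall c (r / 2)) :
    dist (Real.log ‖f z - w‖) (Real.log ‖f c - w‖) ≤ koebeConst := by
  obtain ⟨h, hh⟩ := exists_log_sub hr hf hw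
  have hsub : closedBall c (r / 2) ⊆ ball c r := closedBall_subset_ball (by linarith)
  have hc : c ∈ closedBall c (r / 2) := mem_closedBall_self (by linarith)
  have hlog : ∀ x ∈ closedBall c (r / 2), Real.log ‖f x - w‖ = (h x).re := fun x hx ↦ by
    rw [← (hh x (hsub hx)).2, Complex.norm_exp, Real.log_exp]
  have hbound : ∀ x ∈ closedBall c (r / 2), ‖deriv f x / (f x - w)‖ ≤ koebeConst / (r / 2) := by
    intro x hx
    have hball : ball x (r / 2) ⊆ ball c r := ball_subset_ball' (by
      linarith [mem_closedBall.mp hx])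
    have hkoebe := mul_norm_deriv_le_koebeConst_mul (half_pos hr) (hf.mono hball)
      (hinj.mono hball) (fun hmem ↦ hw (image_mono hball hmem))
    have hpos : 0 < ‖f x - w‖ := norm_pos_iff.mpr fun h0 ↦ hw ⟨x, hsub hx, sub_eq_zero.mp h0⟩
    rw [norm_div, div_le_div_iff₀ hpos (half_pos hr)]
    linarith
  have hmean := (convex_closedBall c (r / 2)).norm_image_sub_le_of_norm_hasDerivWithin_le
    (fun x hx ↦ (hh x (hsub hx)).1.hasDerivWithinAt) hbound hc hz
  calc dist (Real.log ‖f z - w‖) (Real.log ‖f c - w‖) = |(h z - h c).re| := by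
        rw [hlog z hz, hlog c hc, Real.dist_eq, Complex.sub_re]
    _ ≤ ‖h z - h c‖ := Complex.abs_re_le_norm _
    _ ≤ koebeConst / (r / 2) * ‖z - c‖ := hmean
    _ ≤ koebeConst / (r / 2) * (r / 2) := by
      have := koebeConst_pos
      gcongr
      exact mem_closedBall_iff_norm.mp hz
    _ = koebeConst := div_mul_cancel₀ _ (half_pos hr).ne'

theorem exists_norm_sub_le_mul_norm_sub {lam : ℝ} (hlam : 0 < lam) :
    ∃ H, 1 ≤ H ∧ ∀ (U Q : Set ℂ) (f : ℂ → ℂ) (w : ℂ) (r : ℝ), DifferentiableOn ℂ f U → InjOn f U →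
      w ∉ f '' U → IsPreconnected Q → 0 < r → (∀ z ∈ Q, ball z r ⊆ U) →
      (∀ x ∈ Q, ∀ y ∈ Q, dist x y ≤ lam * r) →
      ∀ x ∈ Q, ∀ y ∈ Q, ‖f x - w‖ ≤ H * ‖f y - w‖ := by
  obtain ⟨t, ht⟩ := exists_finset_closedBall_subset (E := ℂ) (ε := 1 / (4 * lam)) (by positivity)
  refine ⟨Real.exp (t.card * koebeConst), Real.one_le_exp (by positivity [koebeConst_pos]), ?_⟩
  intro U Q f w r hf hinj hw hQ hr hball hdiam x hx y hy
  have hQU : Q ⊆ U := fun z hz ↦ hball z hz (mem_ball_self hr)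
  have hpos : ∀ z ∈ Q, 0 < ‖f z - w‖ := fun z hz ↦
    norm_pos_iff.mpr fun h0 ↦ hw ⟨z, hQU hz, sub_eq_zero.mp h0⟩
  have hcont : ContinuousOn (fun z ↦ Real.log ‖f z - w‖) Q :=
    ((hf.continuousOn.mono hQU).sub continuousOn_const).norm.log fun z hz ↦ (hpos z hz).ne'
  have hcover : Q ⊆ ⋃ i ∈ t, closedBall (x + (lam * r) • i) (r / 4) := by
    rw [show r / 4 = lam * r * (1 / (4 * lam)) by field_simp]
    exact fun z hz ↦ ht x (lam * r) (by positivity) (mem_closedBall.mpr (hdiam z hz x hx))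
  have hosc : ∀ i ∈ t, ∀ z ∈ Q ∩ closedBall (x + (lam * r) • i) (r / 4),
      ∀ z' ∈ Q ∩ closedBall (x + (lam * r) • i) (r / 4),
      dist (Real.log ‖f z - w‖) (Real.log ‖f z' - w‖) ≤ koebeConst := by
    rintro i - z ⟨-, hzi⟩ z' ⟨hz', hzi'⟩
    have hzz' : dist z z' ≤ r / 2 := by
      linarith [dist_triangle_right z z' (x + (lam * r) • i), mem_closedBall.mp hzi,
        mem_closedBall.mp hzi']
    exact dist_log_norm_sub_le_koebeConst hr (hf.mono (hball z' hz')) (hinj.mono (hball z' hz'))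
      (fun hmem ↦ hw (image_mono (hball z' hz') hmem)) hzz'
  have hlog : Real.log ‖f x - w‖ ≤ t.card * koebeConst + Real.log ‖f y - w‖ := by
    have := dist_le_card_mul_of_isPreconnected hQ hcont hcover hosc hx hy
    rw [Real.dist_eq] at this
    linarith [le_abs_self (Real.log ‖f x - w‖ - Real.log ‖f y - w‖)]
  calc ‖f x - w‖ = Real.exp (Real.log ‖f x - w‖) := (Real.exp_log (hpos x hx)).symm
    _ ≤ Real.exp (t.card * koebeConst + Real.log ‖f y - w‖) := Real.exp_le_exp.mpr hlog
    _ = Real.exp (t.card * koebeConst) * ‖f y - w‖ := by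
      rw [Real.exp_add, Real.exp_log (hpos y hy)]

end Distortion

section Whitney

variable {U Q : Set ℂ} {lam : ℝ}

lemma setDistE_lt_iff {A B : Set ℂ} {ρ : ENNReal} :
    setDistE A B < ρ ↔ ∃ a ∈ A, infEDist a B < ρ := by
  change ⨅ a ∈ A, infEDist a B < ρ ↔ _
  simp only [iInf_lt_iff, exists_prop]

lemma isWhitneyTypeE_of_forall_dist_le {V A : Set ℂ} {c w : ℂ} {s : ℝ} (hlam : 0 < lam)
    (hs : 0 < s) (hA : IsConnected A) (hc : closedBall c s ⊆ A)
    (hdiam : ∀ a ∈ A, ∀ b ∈ A, dist a b ≤ lam * s)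
    (hlow : ∀ z ∈ A, ∀ y ∈ frontier V, ∀ a ∈ A, ∀ b ∈ A, dist a b ≤ lam * dist z y)
    (hw : w ∈ frontier V) (hup : dist c w ≤ lam * s) : IsWhitneyTypeE V A lam := by
  have hlam' : ENNReal.ofReal lam ≠ 0 := (ENNReal.ofReal_pos.mpr hlam).ne'
  have hcA : c ∈ A := hc (mem_closedBall_self hs.le)
  refine ⟨hA, ⟨c, ?_⟩, le_iInf₂ fun z hz ↦ le_infEDist.mpr fun y hy ↦ ?_, ?_⟩
  · have hle : ediam A / ENNReal.ofReal lam ≤ ENNReal.ofReal s := by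
      refine ENNReal.div_le_of_le_mul' ?_
      rw [← ENNReal.ofReal_mul hlam.le]
      exact ediam_le_of_forall_dist_le hdiam
    rw [← closedEBall_ofReal hs.le] at hc
    exact (closedEBall_subset_closedEBall hle).trans hc
  · refine ENNReal.div_le_of_le_mul' ?_
    rw [edist_dist, ← ENNReal.ofReal_mul hlam.le]
    exact ediam_le_of_forall_dist_le (hlow z hz y hy)
  · have hcs : c + s ∈ A := hc (by simp [abs_of_pos hs])
    calc setDistE A (frontier V) ≤ edist c w := (iInf₂_le c hcA).trans (infEDist_le_edist_of_mem hw)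
      _ ≤ ENNReal.ofReal (lam * s) := edist_dist c w ▸ ENNReal.ofReal_le_ofReal hup
      _ = ENNReal.ofReal lam * edist (c + s) c := by
        rw [ENNReal.ofReal_mul hlam.le, edist_dist, dist_eq_norm, add_sub_cancel_left,
          Complex.norm_of_nonneg hs.le]
      _ ≤ ENNReal.ofReal lam * ediam A := by
        gcongr
        exact edist_le_ediam_of_mem hcs hcA

lemma ofReal_diam_div (hlam : 0 < lam) (hQ : Bornology.IsBounded Q) :
    ENNReal.ofReal (diam Q / lam) = ediam Q / ENNReal.ofReal lam := by
  rw [ENNReal.ofReal_div_of_pos hlam, diam, ENNReal.ofReal_toReal hQ.ediam_ne_top]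

namespace IsWhitneyTypeE

lemma isBounded (hQ : IsWhitneyTypeE U Q lam) (hQU : Q ⊆ U) (hU : U ≠ univ) :
    Bornology.IsBounded Q := by
  obtain ⟨z, hz⟩ := hQ.1.nonempty
  obtain ⟨w, hw⟩ := nonempty_frontier_iff.mpr ⟨⟨z, hQU hz⟩, hU⟩
  refine isBounded_iff_ediam_ne_top.mpr fun htop ↦ ?_
  have hle : ediam Q / ENNReal.ofReal lam ≤ edist z w :=
    hQ.2.2.1.trans ((iInf₂_le z hz).trans (infEDist_le_edist_of_mem hw))
  rw [htop, ENNReal.top_div_of_ne_top ENNReal.ofReal_ne_top, top_le_iff] at hle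
  exact edist_ne_top z w hle

lemma diam_pos (hQ : IsWhitneyTypeE U Q lam) (hU : IsOpen U) (hQU : Q ⊆ U) (hne : U ≠ univ) :
    0 < diam Q := by
  obtain ⟨z, hz⟩ := hQ.1.nonempty
  refine Metric.diam_pos ?_ (hQ.isBounded hQU hne)
  by_contra hsub
  have hsing : Q = {z} := (not_nontrivial_iff.mp hsub).eq_singleton_of_mem hz
  have hpos : 0 < infEDist z (frontier U) := by
    rw [infEDist_pos_iff_notMem_closure, isClosed_frontier.closure_eq, hU.frontier_eq]
    exact fun h ↦ h.2 (hQU hz)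
  have hdist : setDistE Q (frontier U) = infEDist z (frontier U) := by
    rw [hsing, setDistE]
    exact iInf_singleton
  have hzero : ENNReal.ofReal lam * ediam Q = 0 := by simp [hsing]
  exact hpos.not_ge (hdist ▸ hQ.2.2.2.trans_eq hzero)

lemma ball_subset (hQ : IsWhitneyTypeE U Q lam) (hlam : 0 < lam) (hQU : Q ⊆ U) (hU : U ≠ univ)
    {z : ℂ} (hz : z ∈ Q) : ball z (diam Q / lam) ⊆ U := by
  refine ball_subset_of_le_infEDist_frontier (hQU hz) ?_
  rw [ofReal_diam_div hlam (hQ.isBounded hQU hU)]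
  exact hQ.2.2.1.trans (iInf₂_le z hz)

lemma exists_closedBall_subset (hQ : IsWhitneyTypeE U Q lam) (hlam : 0 < lam) (hQU : Q ⊆ U)
    (hU : U ≠ univ) : ∃ c, closedBall c (diam Q / lam) ⊆ Q := by
  obtain ⟨c, hc⟩ := hQ.2.1
  refine ⟨c, fun y hy ↦ hc (mem_closedEBall.mpr ?_)⟩
  exact (edist_le_ofReal (by positivity)).mpr hy |>.trans_eq
    (ofReal_diam_div hlam (hQ.isBounded hQU hU))

lemma exists_notMem_dist_le (hQ : IsWhitneyTypeE U Q lam) (hlam : 0 < lam) (hU : IsOpen U)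
    (hQU : Q ⊆ U) (hne : U ≠ univ) {c : ℂ} (hc : c ∈ Q) :
    ∃ w ∉ U, dist c w ≤ (1 + 2 * lam) * diam Q := by
  have hbdd := hQ.isBounded hQU hne
  have hpos := hQ.diam_pos hU hQU hne
  have hlt : setDistE Q (frontier U) < ENNReal.ofReal (2 * lam * diam Q) := calc
    setDistE Q (frontier U) ≤ ENNReal.ofReal (lam * diam Q) := by
      rw [ENNReal.ofReal_mul hlam.le, diam, ENNReal.ofReal_toReal hbdd.ediam_ne_top]
      exact hQ.2.2.2
    _ < ENNReal.ofReal (2 * lam * diam Q) := by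
      rw [ENNReal.ofReal_lt_ofReal_iff (by positivity)]
      linarith [mul_pos hlam hpos]
  obtain ⟨a, ha, hinf⟩ := setDistE_lt_iff.mp hlt
  obtain ⟨w, hw, haw⟩ := infEDist_lt_iff.mp hinf
  rw [hU.frontier_eq] at hw
  refine ⟨w, hw.2, ?_⟩
  linarith [dist_triangle c a w, dist_le_diam_of_mem hbdd hc ha, edist_lt_ofReal.mp haw]

end IsWhitneyTypeE

theorem isWhitneyTypeE_image {f : ℂ → ℂ} {c w₀ : ℂ} {r L H : ℝ} (hU : IsOpen U)
    (hf : DifferentiableOn ℂ f U) (hinj : InjOn f U) (hQU : Q ⊆ U) (hQ : IsConnected Q)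
    (hr : 0 < r) (hc : closedBall c r ⊆ Q) (hL : 1 ≤ L) (hw₀ : w₀ ∉ U) (hcw₀ : dist c w₀ ≤ L * r)
    (hH : 1 ≤ H)
    (hharnack : ∀ w ∉ f '' U, ∀ x ∈ Q, ∀ y ∈ Q, ‖f x - w‖ ≤ H * ‖f y - w‖) :
    IsWhitneyTypeE (f '' U) (f '' Q) (4 * koebeConst ^ 2 * L * H) := by
  have hK := one_le_koebeConst
  have hcU : c ∈ U := hQU (hc (mem_closedBall_self hr.le))
  have hm : 0 < ‖deriv f c‖ := norm_pos_iff.mpr (deriv_ne_zero_of_injOn hU hf hinj hcU)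
  set s := r * ‖deriv f c‖ / (2 * koebeConst) with hs
  have hs0 : 0 < s := by positivity
  have hballQ : ball c r ⊆ Q := ball_subset_closedBall.trans hc
  have hdisk : closedBall (f c) s ⊆ f '' Q := by
    have hcover := ball_subset_image_of_injOn hr (hf.mono (hballQ.trans hQU))
      (hinj.mono (hballQ.trans hQU))
    refine (closedBall_subset_ball ?_).trans (hcover.trans (image_mono hballQ))
    rw [show r * ‖deriv f c‖ / koebeConst = 2 * s by rw [hs]; field_simp]
    linarith
  obtain ⟨w, hw, hcw⟩ : ∃ w ∈ frontier (f '' U), dist (f c) w ≤ 2 * koebeConst ^ 2 * L * s := by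
    refine exists_mem_frontier_dist_le (mem_image_of_mem f hcU) (by positivity) fun R hR ↦ ?_
    calc R ≤ koebeConst * ‖deriv f c‖ * ‖c - w₀‖ :=
          le_koebeConst_mul_of_ball_subset_image hU hf hinj hcU hw₀ hR
      _ ≤ koebeConst * ‖deriv f c‖ * (L * r) := by rw [← dist_eq_norm]; gcongr
      _ = 2 * koebeConst ^ 2 * L * s := by rw [hs]; field_simp
  have hfrontier : ∀ y ∈ frontier (f '' U), y ∉ f '' U := fun y hy ↦
    ((isOpen_image_of_injOn hU hf hinj).frontier_eq ▸ hy).2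
  have hdist : ∀ z ∈ f '' Q, ∀ y ∈ frontier (f '' U), ∀ a ∈ f '' Q, ∀ b ∈ f '' Q,
      dist a b ≤ 2 * H * dist z y := by
    rintro _ ⟨z, hz, rfl⟩ y hy _ ⟨a, ha, rfl⟩ _ ⟨b, hb, rfl⟩
    have hy' := hfrontier y hy
    have htri := dist_triangle_right (f a) (f b) y
    simp only [dist_eq_norm] at htri ⊢
    linarith [hharnack y hy' a ha z hz, hharnack y hy' b hb z hz]
  have hKL : 1 ≤ koebeConst ^ 2 * L := one_le_mul_of_one_le_of_one_le (one_le_pow₀ hK) hL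
  refine isWhitneyTypeE_of_forall_dist_le (by positivity) hs0
    (hQ.image f (hf.continuousOn.mono hQU)) hdisk (fun a ha b hb ↦ ?_)
    (fun z hz y hy a ha b hb ↦ (hdist z hz y hy a ha b hb).trans ?_) hw (hcw.trans ?_)
  · calc dist a b ≤ 2 * H * dist (f c) w :=
          hdist _ (hdisk (mem_closedBall_self hs0.le)) w hw a ha b hb
      _ ≤ 2 * H * (2 * koebeConst ^ 2 * L * s) := by gcongr
      _ = 4 * koebeConst ^ 2 * L * H * s := by ring
  · gcongr
    nlinarith
  · gcongr ?_ * s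
    nlinarith

end Whitney

theorem stmt3_general (lam₁ : ℝ) (hlam₁ : 1 ≤ lam₁) :
    ∃ lam₂ : ℝ, 1 ≤ lam₂ ∧
      ∀ (U : Set ℂ) (φ : ℂ → ℂ) (Q : Set ℂ),
        IsOpen U → U ≠ univ → DifferentiableOn ℂ φ U → InjOn φ U →
        Q ⊆ U → IsWhitneyTypeE U Q lam₁ → IsWhitneyTypeE (φ '' U) (φ '' Q) lam₂ := by
  have hlam : 0 < lam₁ := one_pos.trans_le hlam₁
  have hK := one_le_koebeConst
  obtain ⟨H, hH, hharnack⟩ := exists_norm_sub_le_mul_norm_sub hlam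
  have hL : 1 ≤ (1 + 2 * lam₁) * lam₁ := by nlinarith
  refine ⟨4 * koebeConst ^ 2 * ((1 + 2 * lam₁) * lam₁) * H, ?_, ?_⟩
  · have hKL := one_le_mul_of_one_le_of_one_le (one_le_pow₀ hK (n := 2)) hL
    nlinarith [one_le_mul_of_one_le_of_one_le hKL hH]
  intro U φ Q hU hne hφ hinj hQU hQ
  have hpos : 0 < diam Q / lam₁ := div_pos (hQ.diam_pos hU hQU hne) hlam
  have hdiam : diam Q = lam₁ * (diam Q / lam₁) := by field_simp
  obtain ⟨c, hc⟩ := hQ.exists_closedBall_subset hlam hQU hne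
  obtain ⟨w₀, hw₀, hcw₀⟩ :=
    hQ.exists_notMem_dist_le hlam hU hQU hne (hc (mem_closedBall_self hpos.le))
  refine isWhitneyTypeE_image hU hφ hinj hQU hQ.1 hpos hc hL hw₀ ?_ hH fun w hw ↦ ?_
  · rwa [mul_assoc, ← hdiam]
  · refine hharnack U Q φ w _ hφ hinj hw hQ.1.isPreconnected hpos
      (fun z hz ↦ hQ.ball_subset hlam hQU hne hz) fun x hx y hy ↦ ?_
    rw [← hdiam]
    exact dist_le_diam_of_mem (hQ.isBounded hQU hne) hx hy

/-- a conformal map `φ : 𝔻 → Ω'` onto a simply connected domain sends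
`λ₁`-Whitney-type sets of `𝔻` to `λ₂`-Whitney-type sets of `Ω'`, with `λ₂ = λ₂(λ₁)`. -/
theorem stmt3 (lam₁ : ℝ) (hlam₁ : 1 ≤ lam₁) :
    ∃ lam₂ : ℝ, 1 ≤ lam₂ ∧
      ∀ (Ω' : Set ℂ) (φ : ℂ → ℂ) (Q : Set ℂ),
        IsOpen Ω' → IsConnected Ω' → SimplyConnectedSpace Ω' →
        DifferentiableOn ℂ φ (ball 0 1) → Set.InjOn φ (ball 0 1) →
        φ '' ball 0 1 = Ω' →
        Q ⊆ ball 0 1 → IsWhitneyTypeE (ball 0 1) Q lam₁ →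
        IsWhitneyTypeE Ω' (φ '' Q) lam₂ := by
  obtain ⟨lam₂, hlam₂, h⟩ := stmt3_general lam₁ hlam₁
  refine ⟨lam₂, hlam₂, ?_⟩
  rintro _ φ Q - - - hφ hinj rfl hQ hW
  have hne : ball (0 : ℂ) 1 ≠ univ := (ne_univ_iff_exists_notMem _).mpr ⟨1, by simp⟩
  exact h _ φ Q isOpen_ball hne hφ hinj hQ hW
end

section
/- Let Ω ⊂ ℝ² be a Jordan domain. Then there exists a sequence of Lipschitz domains (G_s) with Ω ⊂⊂ G_{s+1} ⊂⊂ G_s for all s and dist_H(∂G_s, ∂Ω) → 0 as s → ∞, where dist_H denotes Hausdorff distance. One such construction: G_s is the complement in ℝ² of the union of all closed Whitney squares of the unbounded complementary component of Ω whose side length exceeds 2^{-s}. -/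
open MeasureTheory Filter Set Metric

/-- The Euclidean plane `ℝ²`. -/
abbrev E2 : Type := EuclideanSpace ℝ (Fin 2)

/-- `Ω` is a Jordan domain: the bounded connected component of the complement of a
Jordan curve (a continuous injective image of the circle `ℝ/ℤ`). -/
def IsJordanDomain (Ω : Set E2) : Prop :=
  ∃ γ : AddCircle (1 : ℝ) → E2, Continuous γ ∧ Function.Injective γ ∧
    Bornology.IsBounded Ω ∧
    ∃ x ∈ (Set.range γ)ᶜ, Ω = connectedComponentIn (Set.range γ)ᶜ x

/-- `G` is a Lipschitz domain: a bounded domain whose boundary is, locally and in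
suitable orthonormal coordinates (a rigid motion `e`), the subgraph of a Lipschitz
function. -/
def IsLipschitzDomain (G : Set E2) : Prop :=
  IsOpen G ∧ IsConnected G ∧ Bornology.IsBounded G ∧
  ∀ x ∈ frontier G, ∃ U ∈ nhds x, ∃ (f : ℝ → ℝ) (K : NNReal) (e : E2 ≃ᵢ E2),
    LipschitzWith K f ∧ e '' (G ∩ U) = (e '' U) ∩ {y : E2 | y 1 < f (y 0)}

/-!
Only the compact connected set `K = closure Ω` matters. Cover `K` by finitely many balls of a
common small radius `r` centred in `K`, and let `G` be their union; it is connected. At a boundary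
point `x` of `G`, only the centres at distance exactly `r` from `x` count. If `x` is not in the
convex hull of these centres, some direction `v` makes an acute angle with all the vectors from
them to `x`. Near `x`, moving against `v` then brings every point closer to each of these centres,
so `G` satisfies a uniform cone condition at `x` and is the subgraph of a Lipschitz function there.
The remaining radii, for which some `x` is in the hull, are finite in number: at most one for each
set of centres.

The boundaries converge to `∂K` because a segment that leaves a set crosses its boundary. Finally
`∂K = ∂Ω`: otherwise `∂K` would miss a point of the Jordan curve, hence lie in an open arc `A`. For
`w ∈ Ω`, which is not on the curve, the function `z - w` has a continuous logarithm on `A`, hence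
on `∂K`; this is impossible because `w` belongs to the bounded set `K`.
-/

open scoped Topology NNReal RealInnerProductSpace

section SeparationByArcs

theorem isSimplyConnected_of_convex {E : Type*} [AddCommGroup E] [Module ℝ E] [TopologicalSpace E]
    [ContinuousAdd E] [ContinuousSMul ℝ E] {s : Set E} (hs : Convex ℝ s) (hne : s.Nonempty) :
    IsSimplyConnected s := by
  have := hs.contractibleSpace hne
  rw [IsSimplyConnected]
  infer_instance

theorem exists_mem_sphere_exp_ne {g : ℂ → ℂ} {w : ℂ} {R : ℝ} (hR : 0 < R)
    (hg : ContinuousOn g (sphere w R)) : ∃ z ∈ sphere w R, Complex.exp (g z) ≠ z - w := by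
  by_contra! hexp
  have hmem : ∀ θ, circleMap w R θ ∈ sphere w R := circleMap_mem_sphere w hR.le
  have hlift : (fun θ : ℝ => g (circleMap w R θ)) =
      fun θ : ℝ => g (circleMap w R 0) + θ * Complex.I := by
    refine Complex.isCoveringMap_exp.eq_of_comp_eq
      (hg.comp_continuous (continuous_circleMap w R) hmem) (by fun_prop) ?_ 0 (by simp)
    refine funext fun θ => Subtype.ext ?_
    change Complex.exp (g (circleMap w R θ)) =
      Complex.exp (g (circleMap w R 0) + θ * Complex.I)
    rw [Complex.exp_add, hexp _ (hmem θ), hexp _ (hmem 0)]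
    simp [circleMap]
  have hperiod : g (circleMap w R 0) = g (circleMap w R 0) + 2 * Real.pi * Complex.I := by
    simpa [circleMap] using congrFun hlift (2 * Real.pi)
  exact Complex.two_pi_I_ne_zero (left_eq_add.1 hperiod)

/- If `w ∈ W`, then `z - w` outside `W` and `exp (L z)` inside glue to a nonvanishing function on
`ℂ`, whose logarithm would be a logarithm of `z - w` on a large circle. -/
theorem notMem_of_exp_eq_sub_on_frontier {W : Set ℂ} (hW : Bornology.IsBounded W) {L : ℂ → ℂ}
    (hL : Continuous L) {w : ℂ} (hexp : ∀ z ∈ frontier W, Complex.exp (L z) = z - w) :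
    w ∉ W := by
  classical
  intro hw
  let F : ℂ → ℂ := fun z => if z ∈ W then Complex.exp (L z) else z - w
  have hF : Continuous F := Continuous.if hexp (by fun_prop) (by fun_prop)
  have hF₀ : (0 : ℂ) ∉ F '' univ := by
    rintro ⟨z, -, hz⟩
    by_cases hzW : z ∈ W
    · exact Complex.exp_ne_zero _ ((if_pos hzW).symm.trans hz)
    · exact hzW (sub_eq_zero.1 ((if_neg hzW).symm.trans hz) ▸ hw)
  obtain ⟨g, hg, hgF⟩ := Complex.exists_continuousOn_eqOn_exp_comp
    (isSimplyConnected_of_convex convex_univ univ_nonempty) isOpen_univ hF.continuousOn hF₀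
  obtain ⟨R, hR, hWR⟩ := hW.subset_ball_lt 0 w
  obtain ⟨z, hz, hne⟩ := exists_mem_sphere_exp_ne hR (hg.mono (subset_univ (sphere w R)))
  have hzW : z ∉ W := fun h => (mem_ball.1 (hWR h)).ne hz
  exact hne ((hgF (mem_univ z)).trans (if_neg hzW))

theorem subset_image_of_frontier_subset_image {X : Type*} [TopologicalSpace X]
    [LocallyPathConnectedSpace X] {U : Set X} (hUc : IsSimplyConnected U) (hUo : IsOpen U)
    {γ : X → ℂ} (hγ : Topology.IsClosedEmbedding γ) {W : Set ℂ} (hW : Bornology.IsBounded W)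
    (hfr : frontier W ⊆ γ '' U) : W ⊆ γ '' U := by
  intro w hw
  by_contra hwU
  have h₀ : (0 : ℂ) ∉ (fun x => γ x - w) '' U := by
    rintro ⟨x, hx, hxw⟩
    exact hwU ⟨x, hx, sub_eq_zero.1 hxw⟩
  obtain ⟨l, hl, hexp⟩ := Complex.exists_continuousOn_eqOn_exp_comp hUc hUo
    (hγ.continuous.sub continuous_const).continuousOn h₀
  have hPU : γ ⁻¹' frontier W ⊆ U := (preimage_mono hfr).trans_eq (hγ.injective.preimage_image U)
  have hP : IsClosed (γ ⁻¹' frontier W) := isClosed_frontier.preimage hγ.continuous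
  obtain ⟨L, hL⟩ := (ContinuousMap.mk _ (hl.mono hPU).domRestrict).exists_extension'
    (hγ.comp hP.isClosedEmbedding_subtypeVal)
  refine notMem_of_exp_eq_sub_on_frontier hW L.continuous (fun z hz => ?_) hw
  obtain ⟨x, hx, rfl⟩ := hfr hz
  have hLx : L (γ x) = l x := congrFun hL ⟨x, hz⟩
  rw [hLx]
  exact hexp hx

end SeparationByArcs

theorem isSimplyConnected_compl_singleton_addCircle {p : ℝ} [Fact (0 < p)] (c : AddCircle p) :
    IsSimplyConnected ({c}ᶜ : Set (AddCircle p)) := by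
  obtain ⟨a, rfl⟩ := QuotientAddGroup.mk_surjective c
  have hIoo : ContractibleSpace (AddCircle.openPartialHomeomorphCoe p a).source :=
    (convex_Ioo a (a + p)).contractibleSpace
      (nonempty_Ioo.2 (lt_add_of_pos_right a (Fact.out : 0 < p)))
  have hcompl : ContractibleSpace ({(a : AddCircle p)}ᶜ : Set (AddCircle p)) :=
    (AddCircle.openPartialHomeomorphCoe p a).toHomeomorphSourceTarget.symm.contractibleSpace
  rw [IsSimplyConnected]
  infer_instance

theorem locallyPathConnectedSpace_addCircle (p : ℝ) :
    LocallyPathConnectedSpace (AddCircle p) :=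
  Quotient.locallyPathConnectedSpace

theorem frontier_connectedComponentIn_subset_compl {X : Type*} [TopologicalSpace X]
    [LocallyConnectedSpace X] {F : Set X} (hF : IsOpen F) (x : X) :
    frontier (connectedComponentIn F x) ⊆ Fᶜ := by
  intro z hz hzF
  have hzz : z ∈ connectedComponentIn F z := mem_connectedComponentIn hzF
  rw [hF.connectedComponentIn.frontier_eq] at hz
  obtain ⟨y, hyz, hyx⟩ := mem_closure_iff.1 hz.1 _ hF.connectedComponentIn hzz
  rw [connectedComponentIn_eq hyz, ← connectedComponentIn_eq hyx] at hzz
  exact hz.2 hzz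

namespace IsJordanDomain

variable {Ω : Set E2}

theorem isBounded (hΩ : IsJordanDomain Ω) : Bornology.IsBounded Ω :=
  let ⟨_, _, _, hb, _⟩ := hΩ
  hb

theorem isConnected (hΩ : IsJordanDomain Ω) : IsConnected Ω := by
  obtain ⟨γ, -, -, -, x, hx, rfl⟩ := hΩ
  exact isConnected_connectedComponentIn_iff.2 hx

theorem frontier_closure (hΩ : IsJordanDomain Ω) : frontier (closure Ω) = frontier Ω := by
  refine frontier_closure_subset.antisymm fun p hp => ?_
  by_contra hpc
  obtain ⟨w, hw⟩ := hΩ.isConnected.nonempty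
  obtain ⟨γ, hγ, hinj, hb, x, -, rfl⟩ := hΩ
  have hcurve : IsOpen (range γ)ᶜ := (isCompact_range hγ).isClosed.isOpen_compl
  have hfr : frontier (connectedComponentIn (range γ)ᶜ x) ⊆ range γ :=
    (frontier_connectedComponentIn_subset_compl hcurve x).trans_eq (compl_compl _)
  obtain ⟨c, rfl⟩ := hfr hp
  have harc : frontier (closure (connectedComponentIn (range γ)ᶜ x)) ⊆ γ '' {c}ᶜ := by
    intro z hz
    obtain ⟨d, rfl⟩ := hfr (frontier_closure_subset hz)
    exact ⟨d, fun hdc => hpc (hdc ▸ hz), rfl⟩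
  have := locallyPathConnectedSpace_addCircle 1
  let φ : E2 ≃ᵢ ℂ := Complex.orthonormalBasisOneI.repr.symm.toIsometryEquiv
  have hsub := subset_image_of_frontier_subset_image
    (isSimplyConnected_compl_singleton_addCircle c) isOpen_compl_singleton
    (γ := φ ∘ γ) ((φ.continuous.comp hγ).isClosedEmbedding (φ.injective.comp hinj))
    (W := φ '' closure (connectedComponentIn (range γ)ᶜ x))
    (φ.isometry.lipschitz.isBounded_image hb.closure)
    (by rw [← φ.coe_toHomeomorph, ← φ.toHomeomorph.image_frontier, image_comp]
        exact image_mono harc)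
  rw [image_comp] at hsub
  obtain ⟨d, -, hd⟩ := (image_subset_image_iff φ.injective).1 hsub (subset_closure hw)
  exact connectedComponentIn_subset _ _ hw ⟨d, hd⟩

end IsJordanDomain

section FrontierConvergence

theorem inter_frontier_nonempty {X : Type*} [TopologicalSpace X] {t s : Set X}
    (ht : IsPreconnected t) (hs : (t ∩ s).Nonempty) (hsc : (t ∩ sᶜ).Nonempty) :
    (t ∩ frontier s).Nonempty := by
  rw [← not_disjoint_iff_nonempty_inter, ← subset_compl_iff_disjoint_right,
    compl_frontier_eq_union_interior]
  intro hcover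
  obtain ⟨a, hat, has⟩ := hs
  obtain ⟨b, hbt, hbs⟩ := hsc
  have hdisj : Disjoint (interior s) (interior sᶜ) :=
    disjoint_compl_right.mono interior_subset interior_subset
  rcases ht.subset_or_subset isOpen_interior isOpen_interior hdisj hcover with h | h
  · exact hbs (interior_subset (h hbt))
  · exact interior_subset (h hat) has

variable {E : Type*} [NormedAddCommGroup E] [NormedSpace ℝ E]

theorem exists_mem_frontier_dist_add_dist_eq {s : Set E} {p q : E} (hp : p ∈ s) (hq : q ∉ s) :
    ∃ y ∈ frontier s, dist p y + dist y q = dist p q := by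
  obtain ⟨y, hypq, hy⟩ := inter_frontier_nonempty (convex_segment (𝕜 := ℝ) p q).isPreconnected
    ⟨p, left_mem_segment ℝ p q, hp⟩ ⟨q, right_mem_segment ℝ p q, hq⟩
  exact ⟨y, hy, dist_add_dist_of_mem_segment hypq⟩

theorem exists_mem_frontier_dist_le_of_subset_cthickening {K G : Set E} (hK : IsCompact K)
    (hGo : IsOpen G) (hKG : K ⊆ G) {ε : ℝ} (hε : 0 ≤ ε) (hG : G ⊆ cthickening ε K) {x : E}
    (hx : x ∈ frontier G) : ∃ y ∈ frontier K, dist x y ≤ ε := by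
  rw [hGo.frontier_eq] at hx
  have hxK : x ∈ cthickening ε K := closure_minimal hG isClosed_cthickening hx.1
  rw [hK.cthickening_eq_biUnion_closedBall hε, mem_iUnion₂] at hxK
  obtain ⟨k, hk, hxk⟩ := hxK
  obtain ⟨y, hy, hkyx⟩ := exists_mem_frontier_dist_add_dist_eq hk fun h => hx.2 (hKG h)
  rw [mem_closedBall, dist_comm] at hxk
  exact ⟨y, hy, by linarith [dist_comm x y, dist_nonneg (x := k) (y := y)]⟩

theorem eventually_forall_mem_frontier_exists_notMem_dist_lt {X ι : Type*} [MetricSpace X]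
    {l : Filter ι} {K : Set X} (hK : IsCompact K) {G : ι → Set X}
    (hG : Tendsto G l (𝓝ˢ K).smallSets) {ε : ℝ} (hε : 0 < ε) :
    ∀ᶠ i in l, ∀ p ∈ frontier K, ∃ q ∉ G i, dist p q < ε := by
  have hfr : IsCompact (frontier K) :=
    hK.of_isClosed_subset isClosed_frontier hK.isClosed.frontier_subset
  obtain ⟨t, htK, ht, hcover⟩ := hfr.finite_cover_balls (half_pos hε)
  have hcenters : ∀ᶠ i in l, ∀ p ∈ t, ∃ q ∉ G i, dist p q < ε / 2 := by
    refine (eventually_all_finite ht).2 fun p hp => ?_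
    have hpc : p ∈ closure Kᶜ := (frontier_eq_closure_inter_closure.subset (htK hp)).2
    obtain ⟨q, hqK, hpq⟩ := Metric.mem_closure_iff.1 hpc _ (half_pos hε)
    have hq : {q}ᶜ ∈ 𝓝ˢ K :=
      isOpen_compl_singleton.mem_nhdsSet.2 (subset_compl_singleton_iff.2 hqK)
    filter_upwards [tendsto_smallSets_iff.1 hG _ hq] with i hi
    exact ⟨q, fun hqG => hi hqG rfl, hpq⟩
  filter_upwards [hcenters] with i hi p hp
  obtain ⟨p', hp', hpp'⟩ := mem_iUnion₂.1 (hcover hp)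
  obtain ⟨q, hqG, hq⟩ := hi p' hp'
  exact ⟨q, hqG, by linarith [dist_triangle p p' q, mem_ball.1 hpp']⟩

theorem tendsto_hausdorffDist_frontier {ι : Type*} {l : Filter ι} {K : Set E} (hK : IsCompact K)
    {G : ι → Set E} (hGo : ∀ i, IsOpen (G i)) (hKG : ∀ i, K ⊆ G i)
    (hG : Tendsto G l (𝓝ˢ K).smallSets) :
    Tendsto (fun i => hausdorffDist (frontier (G i)) (frontier K)) l (𝓝 0) := by
  refine Metric.tendsto_nhds.2 fun ε hε => ?_
  have hclose := tendsto_smallSets_iff.1 hG _ (cthickening_mem_nhdsSet K (half_pos hε))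
  filter_upwards [hclose,
    eventually_forall_mem_frontier_exists_notMem_dist_lt hK hG (half_pos hε)] with i hi hout
  have hle : hausdorffDist (frontier (G i)) (frontier K) ≤ ε / 2 := by
    refine hausdorffDist_le_of_mem_dist (half_pos hε).le (fun x hx => ?_) fun p hp => ?_
    · exact exists_mem_frontier_dist_le_of_subset_cthickening hK (hGo i) (hKG i)
        (half_pos hε).le hi hx
    · obtain ⟨q, hqG, hpq⟩ := hout p hp
      obtain ⟨y, hy, hpyq⟩ :=
        exists_mem_frontier_dist_add_dist_eq (hKG i (hK.isClosed.frontier_subset hp)) hqG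
      exact ⟨y, hy, by linarith [dist_nonneg (x := y) (y := q)]⟩
  rw [Real.dist_0_eq_abs, abs_of_nonneg hausdorffDist_nonneg]
  linarith

end FrontierConvergence

theorem isCountablyGenerated_nhdsSet_of_isCompact {X : Type*} [PseudoMetricSpace X] {K : Set X}
    (hK : IsCompact K) : (𝓝ˢ K).IsCountablyGenerated := by
  refine ((hasBasis_nhdsSet_thickening hK).to_hasBasis (p' := fun _ : ℕ => True)
    (s' := fun n => thickening (1 / ((n : ℝ) + 1)) K) (fun ε hε => ?_)
    fun n _ => ⟨_, Nat.one_div_pos_of_nat, Subset.rfl⟩).isCountablyGenerated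
  obtain ⟨n, hn⟩ := exists_nat_one_div_lt hε
  exact ⟨n, trivial, thickening_mono hn.le K⟩

theorem exists_seq_closure_subset_tendsto_smallSets {X : Type*} [TopologicalSpace X]
    {F : Filter X} [F.IsCountablyGenerated] {P : Set X → Prop}
    (hP : ∀ U ∈ F, ∃ V ∈ F, P V ∧ closure V ⊆ U) :
    ∃ G : ℕ → Set X, (∀ n, P (G n)) ∧ (∀ n, G n ∈ F) ∧ (∀ n, closure (G (n + 1)) ⊆ G n) ∧
      Tendsto G atTop F.smallSets := by
  obtain ⟨B, hB⟩ := F.exists_antitone_basis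
  choose V hVF hVP hVcl using hP
  let G : ℕ → F.sets := fun n => n.rec ⟨V (B 0) (hB.mem 0), hVF _ _⟩
    fun n W => ⟨V (W ∩ B (n + 1)) (inter_mem W.2 (hB.mem (n + 1))), hVF _ _⟩
  have hGsucc : ∀ n, closure (G (n + 1)).1 ⊆ (G n).1 ∩ B (n + 1) := fun n =>
    hVcl _ (inter_mem (G n).2 (hB.mem (n + 1)))
  have hGP : ∀ n, P (G n).1 := fun n => by
    cases n with
    | zero => exact hVP _ _
    | succ n => exact hVP _ (inter_mem (G n).2 (hB.mem (n + 1)))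
  have hGB : ∀ n, (G n).1 ⊆ B n := fun n => by
    cases n with
    | zero => exact subset_closure.trans (hVcl _ _)
    | succ n => exact subset_closure.trans ((hGsucc n).trans inter_subset_right)
  exact ⟨fun n => (G n).1, hGP, fun n => (G n).2, fun n => (hGsucc n).trans inter_subset_left,
    tendsto_smallSets_iff.2 fun U hU =>
      (tendsto_smallSets_iff.1 hB.tendsto_smallSets U hU).mono fun n => (hGB n).trans⟩

section LipschitzSubgraph

theorem lipschitzWith_ciSup {α ι : Type*} [PseudoMetricSpace α] [Nonempty ι] {K : ℝ≥0}
    {f : ι → α → ℝ} (hf : ∀ i, LipschitzWith K (f i))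
    (hbdd : ∀ x, BddAbove (range fun i => f i x)) : LipschitzWith K fun x => ⨆ i, f i x :=
  LipschitzWith.of_le_add_mul K fun x y => ciSup_le fun i =>
    ((hf i).le_add_mul x y).trans (by gcongr; exact le_ciSup (hbdd y) i)

/-- The upper envelope of the downward vertical cones of slope `L` with apex in `S`, as a function
of the horizontal coordinate. -/
noncomputable def coneEnvelope (L : ℝ≥0) (S : Set E2) (t : ℝ) : ℝ :=
  ⨆ p : S, (p.1 1 - L * |t - p.1 0|)

theorem bddAbove_range_cone {S : Set E2} (hS : Bornology.IsBounded S) (L : ℝ≥0) (t : ℝ) :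
    BddAbove (range fun p : S => p.1 1 - L * |t - p.1 0|) := by
  obtain ⟨R, hR⟩ := hS.exists_norm_le
  refine ⟨R, forall_mem_range.2 fun p => ?_⟩
  calc p.1 1 - L * |t - p.1 0| ≤ p.1 1 := sub_le_self _ (by positivity)
    _ ≤ ‖p.1‖ := (Real.le_norm_self _).trans (PiLp.norm_apply_le p.1 1)
    _ ≤ R := hR p p.2

theorem lipschitzWith_coneEnvelope {S : Set E2} (hS : Bornology.IsBounded S)
    (hne : S.Nonempty) (L : ℝ≥0) : LipschitzWith L (coneEnvelope L S) := by
  have := hne.to_subtype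
  refine lipschitzWith_ciSup (fun p => LipschitzWith.of_le_add_mul L fun s t => ?_)
    (bddAbove_range_cone hS L)
  have htri : |t - p.1 0| ≤ |s - p.1 0| + dist s t := by
    rw [Real.dist_eq, abs_sub_comm s t, add_comm]
    exact abs_sub_le t s _
  linarith [mul_le_mul_of_nonneg_left htri L.coe_nonneg]

theorem lt_coneEnvelope {S : Set E2} (hSo : IsOpen S) (hS : Bornology.IsBounded S) (L : ℝ≥0)
    {p : E2} (hp : p ∈ S) : p 1 < coneEnvelope L S (p 0) := by
  have hcont : Tendsto (fun s : ℝ => p + s • EuclideanSpace.single 1 1) (𝓝[>] 0) (𝓝 p) :=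
    tendsto_nhdsWithin_of_tendsto_nhds (Continuous.tendsto' (by fun_prop) _ _ (by simp))
  obtain ⟨s, hsS, hs⟩ :=
    ((hcont.eventually_mem (hSo.mem_nhds hp)).and self_mem_nhdsWithin).exists
  let q : S := ⟨_, hsS⟩
  calc p 1 < p 1 + s := lt_add_of_pos_right _ hs
    _ = q.1 1 - L * |p 0 - q.1 0| := by simp [q]
    _ ≤ coneEnvelope L S (p 0) := le_ciSup (bddAbove_range_cone hS L (p 0)) q

/-- Near `x`, the set `G` is the strict subgraph of a Lipschitz function in suitable orthonormal
coordinates: the boundary condition of `IsLipschitzDomain` at the point `x`. -/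
def IsLocallyLipschitzSubgraph (G : Set E2) (x : E2) : Prop :=
  ∃ U ∈ 𝓝 x, ∃ (f : ℝ → ℝ) (K : ℝ≥0) (e : E2 ≃ᵢ E2),
    LipschitzWith K f ∧ e '' (G ∩ U) = (e '' U) ∩ {y : E2 | y 1 < f (y 0)}

/-- The uniform interior cone condition at `x`: near `x`, the set `G` contains, with each of its
points, a cone of fixed axis `-v` and aperture based at that point. The inequality defining the
cone forces `t` to be positive. -/
def HasUniformInnerConeAt {E : Type*} [NormedAddCommGroup E] [InnerProductSpace ℝ E]
    (G : Set E) (x : E) : Prop :=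
  ∃ v : E, ‖v‖ = 1 ∧ ∃ L : ℝ≥0, ∃ ρ > 0, ∀ y ∈ G ∩ ball x ρ, ∀ z ∈ ball x ρ, ∀ t : ℝ,
    L * ‖y - z - t • v‖ < t → z ∈ G

theorem exists_orthonormalBasis_apply_eq {ι E : Type*} [Fintype ι] [NormedAddCommGroup E]
    [InnerProductSpace ℝ E] [FiniteDimensional ℝ E] (hcard : Module.finrank ℝ E = Fintype.card ι)
    (i : ι) {v : E} (hv : ‖v‖ = 1) : ∃ b : OrthonormalBasis ι ℝ E, b i = v := by
  have hon : Orthonormal ℝ (({i} : Set ι).domRestrict fun _ => v) :=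
    ⟨fun _ => hv, fun j k hjk => absurd (Subsingleton.elim j k) hjk⟩
  obtain ⟨b, hb⟩ := hon.exists_orthonormalBasis_extension_of_card_eq hcard
  exact ⟨b, hb i rfl⟩

theorem norm_sub_repr_one_smul_eq {E : Type*} [NormedAddCommGroup E] [InnerProductSpace ℝ E]
    (b : OrthonormalBasis (Fin 2) ℝ E) (u : E) :
    ‖u - b.repr u 1 • b 1‖ = |b.repr u 0| := by
  have hu : u - b.repr u 1 • b 1 = b.repr u 0 • b 0 := by
    rw [sub_eq_iff_eq_add, ← Fin.sum_univ_two (fun i => b.repr u i • b i), b.sum_repr]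
  rw [hu, norm_smul, b.norm_eq_one, mul_one, Real.norm_eq_abs]

theorem HasUniformInnerConeAt.isLocallyLipschitzSubgraph {G : Set E2} {x : E2}
    (hcone : HasUniformInnerConeAt G x) (hG : IsOpen G) (hx : x ∈ closure G) :
    IsLocallyLipschitzSubgraph G x := by
  obtain ⟨v, hv, L, ρ, hρ, hmem⟩ := hcone
  obtain ⟨b, rfl⟩ := exists_orthonormalBasis_apply_eq (by simp) (1 : Fin 2) hv
  let e : E2 ≃ᵢ E2 := b.repr.toIsometryEquiv
  let S : Set E2 := e '' (G ∩ ball x ρ)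
  have hSo : IsOpen S := e.toHomeomorph.isOpenMap _ (hG.inter isOpen_ball)
  have hSb : Bornology.IsBounded S :=
    e.isometry.lipschitz.isBounded_image (isBounded_ball.subset inter_subset_right)
  have hSne : S.Nonempty :=
    (inter_comm _ _ ▸ mem_closure_iff_nhds.1 hx _ (ball_mem_nhds x hρ)).image e
  refine ⟨ball x ρ, ball_mem_nhds x hρ, coneEnvelope L S, L, e,
    lipschitzWith_coneEnvelope hSb hSne L, ?_⟩
  refine Subset.antisymm (subset_inter (image_mono inter_subset_right)
    fun y hy => lt_coneEnvelope hSo hSb L hy) ?_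
  rintro - ⟨⟨z, hz, rfl⟩, hlt⟩
  have := hSne.to_subtype
  obtain ⟨⟨-, y, hy, rfl⟩, hzy⟩ : ∃ p : S, e z 1 < p.1 1 - L * |e z 0 - p.1 0| :=
    exists_lt_of_lt_ciSup hlt
  refine ⟨z, ⟨hmem y hy z hz (b.repr (y - z) 1) ?_, hz⟩, rfl⟩
  have hnorm := norm_sub_repr_one_smul_eq b (y - z)
  have h0 : b.repr (y - z) 0 = e y 0 - e z 0 := by simp [e]
  have h1 : b.repr (y - z) 1 = e y 1 - e z 1 := by simp [e]
  rw [hnorm, h0, h1, abs_sub_comm]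
  linarith

end LipschitzSubgraph

section UnionOfBalls

variable {E : Type*} [NormedAddCommGroup E] [InnerProductSpace ℝ E]

theorem norm_sub_le_norm_of_le_inner {a u v : E} {t δ : ℝ} (hv : ‖v‖ ≤ 1)
    (hav : δ ≤ ⟪a, v⟫) (hu : 2 * ‖u‖ ≤ δ) (hut : ‖u - t • v‖ ≤ t)
    (hδt : 2 * (‖a‖ * ‖u - t • v‖) ≤ δ * t) : ‖a - u‖ ≤ ‖a‖ := by
  have ht : 0 ≤ t := (norm_nonneg _).trans hut
  have hinner : δ * t ≤ 2 * ⟪a, u⟫ := by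
    have hsplit : ⟪a, u⟫ = t * ⟪a, v⟫ + ⟪a, u - t • v⟫ := by
      rw [inner_sub_right, inner_smul_right]; ring
    have hcs := neg_le_of_abs_le (abs_real_inner_le_norm a (u - t • v))
    linarith [mul_le_mul_of_nonneg_left hav ht]
  have hnorm : ‖u‖ ≤ 2 * t := by
    have htv : ‖t • v‖ ≤ t := by
      rw [norm_smul, Real.norm_of_nonneg ht]
      exact mul_le_of_le_one_right ht hv
    linarith [norm_le_norm_sub_add u (t • v)]
  have hsq : ‖u‖ ^ 2 ≤ δ * t := by
    nlinarith [norm_nonneg u]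
  rw [← sq_le_sq₀ (norm_nonneg _) (norm_nonneg a), norm_sub_sq_real]
  linarith

theorem exists_forall_le_inner_sub {K : Set E} (hK : IsComplete K) (hKc : Convex ℝ K)
    (hne : K.Nonempty) {x : E} (hx : x ∉ K) :
    ∃ v : E, ‖v‖ = 1 ∧ ∃ δ > 0, ∀ c ∈ K, δ ≤ ⟪x - c, v⟫ := by
  obtain ⟨p, hp, hmin⟩ := exists_norm_eq_iInf_of_complete_convex hne hK hKc x
  have hobtuse := (norm_eq_iInf_iff_real_inner_le_zero hKc hp).1 hmin
  have hpos : 0 < ‖x - p‖ := norm_pos_iff.2 (sub_ne_zero.2 fun h => hx (h ▸ hp))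
  refine ⟨‖x - p‖⁻¹ • (x - p), norm_smul_inv_norm (norm_pos_iff.1 hpos), _, hpos, fun c hc => ?_⟩
  have hle : ‖x - p‖ * ‖x - p‖ ≤ ⟪x - c, x - p⟫ := by
    have hcp := hobtuse c hc
    rw [← real_inner_self_eq_norm_mul_norm, ← sub_nonneg, ← inner_sub_left, sub_sub_sub_cancel_left,
      real_inner_comm, ← neg_sub c p, inner_neg_right]
    linarith
  rwa [inner_smul_right, ← div_eq_inv_mul, le_div_iff₀ hpos]

/-- `r` is a critical radius for `C` if some point lies in the convex hull of the points of `C` at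
distance exactly `r` from it. These include the critical values of the distance to a finite set `C`,
at which the boundary of the union of balls of radius `r` may fail to be Lipschitz. -/
def IsCriticalRadius (C : Set E) (r : ℝ) : Prop :=
  ∃ x, x ∈ convexHull ℝ {c ∈ C | dist x c = r}

/- The difference of the squared distances to two such points `x` and `y` is constant on `S`, so
the convex hull of `S` lies in a hyperplane orthogonal to `y - x`. -/
theorem subsingleton_setOf_exists_mem_convexHull_forall_dist_eq (S : Set E) :
    {r : ℝ | ∃ x ∈ convexHull ℝ S, ∀ c ∈ S, dist x c = r}.Subsingleton := by
  rintro r ⟨x, hx, hxS⟩ r' ⟨y, hy, hyS⟩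
  let k : ℝ := (r ^ 2 - r' ^ 2 - ‖x‖ ^ 2 + ‖y‖ ^ 2) / 2
  have hhyp : convexHull ℝ S ⊆ {c | ⟪y - x, c⟫ = k} := by
    refine convexHull_min (fun c hc => ?_) (convex_hyperplane (innerₛₗ ℝ (y - x)).isLinear k)
    have hxc := norm_sub_sq_real x c
    have hyc := norm_sub_sq_real y c
    rw [← dist_eq_norm, hxS c hc] at hxc
    rw [← dist_eq_norm, hyS c hc] at hyc
    rw [mem_ofPred_eq, inner_sub_left]
    simp only [k]
    linarith
  have hxy : y = x := by
    rw [← sub_eq_zero, ← inner_self_eq_zero (𝕜 := ℝ), inner_sub_right, hhyp hx, hhyp hy, sub_self]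
  obtain ⟨c, hc⟩ := convexHull_nonempty_iff.1 ⟨x, hx⟩
  rw [← hxS c hc, ← hyS c hc, hxy]

theorem finite_setOf_isCriticalRadius {C : Set E} (hC : C.Finite) :
    {r | IsCriticalRadius C r}.Finite := by
  refine (hC.finite_subsets.biUnion fun S _ =>
    (subsingleton_setOf_exists_mem_convexHull_forall_dist_eq S).finite).subset ?_
  rintro r ⟨x, hx⟩
  exact mem_biUnion (sep_subset C _) ⟨x, hx, fun c hc => hc.2⟩

theorem hasUniformInnerConeAt_thickening_of_eventually {C : Set E} {r δ : ℝ} {x v : E}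
    (hv : ‖v‖ = 1) (hδ : 0 < δ) (h : ∀ᶠ y in 𝓝 x, ∀ c ∈ C, dist y c < r → δ ≤ ⟪y - c, v⟫) :
    HasUniformInnerConeAt (thickening r C) x := by
  obtain ⟨ρ, hρ, hball⟩ := Metric.eventually_nhds_iff_ball.1 h
  refine ⟨v, hv, (1 + 2 * r / δ).toNNReal, min ρ (δ / 4), by positivity, ?_⟩
  rintro y ⟨hyG, hy⟩ z hz t ht
  obtain ⟨c, hc, hyc⟩ := mem_thickening_iff.1 hyG
  rw [mem_ball, lt_min_iff] at hy hz
  have hu : 2 * ‖y - z‖ ≤ δ := by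
    rw [← dist_eq_norm]
    linarith [dist_triangle_right y z x]
  have hr : 0 ≤ r := dist_nonneg.trans hyc.le
  have hcone : (1 + 2 * r / δ) * ‖y - z - t • v‖ ≤ t :=
    (mul_le_mul_of_nonneg_right (Real.le_coe_toNNReal _) (norm_nonneg _)).trans ht.le
  have hut : ‖y - z - t • v‖ ≤ t :=
    (le_mul_of_one_le_left (norm_nonneg _) (le_add_of_nonneg_right (by positivity))).trans hcone
  have hδt : 2 * (‖y - c‖ * ‖y - z - t • v‖) ≤ δ * t := calc
    2 * (‖y - c‖ * ‖y - z - t • v‖) ≤ 2 * (r * ‖y - z - t • v‖) := by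
      rw [← dist_eq_norm]; gcongr
    _ = δ * (2 * r / δ * ‖y - z - t • v‖) := by field_simp
    _ ≤ δ * t := by
      gcongr
      linarith [norm_nonneg (y - z - t • v)]
  refine mem_thickening_iff.2 ⟨c, hc, lt_of_le_of_lt ?_ hyc⟩
  rw [dist_eq_norm, dist_eq_norm, ← sub_sub_sub_cancel_left c z y]
  exact norm_sub_le_norm_of_le_inner hv.le (hball y hy.1 c hc hyc) hu hut hδt

theorem eventually_forall_lt_inner_sub {C : Set E} (hC : C.Finite) {r δ : ℝ} {x v : E}
    (hxC : ∀ c ∈ C, r ≤ dist x c) (hv : ∀ c ∈ C, dist x c = r → δ < ⟪x - c, v⟫) :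
    ∀ᶠ y in 𝓝 x, ∀ c ∈ C, dist y c < r → δ < ⟪y - c, v⟫ := by
  refine (eventually_all_finite hC).2 fun c hc => ?_
  rcases (hxC c hc).eq_or_lt with heq | hlt
  · filter_upwards [continuousAt_const.eventually_lt
      (f := fun _ => δ) (g := fun y => ⟪y - c, v⟫) (by fun_prop) (hv c hc heq.symm)] with y hy _
    exact hy
  · filter_upwards [continuousAt_const.eventually_lt
      (f := fun _ => r) (g := fun y => dist y c) (by fun_prop) hlt] with y hy hyr
    exact absurd hyr hy.not_gt

theorem forall_le_dist_of_mem_frontier_thickening {X : Type*} [PseudoMetricSpace X] {C : Set X}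
    {r : ℝ} {x : X} (hx : x ∈ frontier (thickening r C)) {c : X} (hc : c ∈ C) : r ≤ dist x c := by
  rw [isOpen_thickening.frontier_eq] at hx
  exact not_lt.1 fun h => hx.2 (mem_thickening_iff.2 ⟨c, hc, h⟩)

theorem exists_dist_eq_of_mem_frontier_thickening {X : Type*} [PseudoMetricSpace X] {C : Set X}
    (hC : C.Finite) {r : ℝ} {x : X} (hx : x ∈ frontier (thickening r C)) :
    ∃ c ∈ C, dist x c = r := by
  have hcl : x ∈ closure (⋃ c ∈ C, ball c r) :=
    thickening_eq_biUnion_ball (δ := r) (E := C) ▸ frontier_subset_closure hx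
  rw [hC.closure_biUnion] at hcl
  obtain ⟨c, hc, hxc⟩ := mem_iUnion₂.1 hcl
  exact ⟨c, hc, (mem_closedBall.1 (closure_ball_subset_closedBall hxc)).antisymm
    (forall_le_dist_of_mem_frontier_thickening hx hc)⟩

theorem hasUniformInnerConeAt_thickening {C : Set E} (hC : C.Finite) {r : ℝ}
    (hr : ¬IsCriticalRadius C r) {x : E} (hx : x ∈ frontier (thickening r C)) :
    HasUniformInnerConeAt (thickening r C) x := by
  have hne : {c ∈ C | dist x c = r}.Nonempty := exists_dist_eq_of_mem_frontier_thickening hC hx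
  have hhull : IsCompact (convexHull ℝ {c ∈ C | dist x c = r}) :=
    (hC.subset (sep_subset C _)).isCompact_convexHull ℝ
  obtain ⟨v, hv, δ, hδ, hsep⟩ := exists_forall_le_inner_sub hhull.isComplete
    (convex_convexHull ℝ _) (convexHull_nonempty_iff.2 hne) fun h => hr ⟨x, h⟩
  have hev := eventually_forall_lt_inner_sub (δ := δ / 2) (v := v) hC
    (fun c => forall_le_dist_of_mem_frontier_thickening hx)
    fun c hc hxc => (half_lt_self hδ).trans_le (hsep c (subset_convexHull ℝ _ ⟨hc, hxc⟩))
  exact hasUniformInnerConeAt_thickening_of_eventually hv (half_pos hδ)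
    (hev.mono fun y hy c hc hyc => (hy c hc hyc).le)

theorem isConnected_thickening_of_subset {F : Type*} [SeminormedAddCommGroup F] [NormedSpace ℝ F]
    {K C : Set F} {r : ℝ} (hK : IsConnected K) (hCK : C ⊆ K) (hKC : K ⊆ thickening r C) :
    IsConnected (thickening r C) := by
  obtain ⟨p, hp⟩ := hK.nonempty
  refine ⟨⟨p, hKC hp⟩, isPreconnected_of_forall p fun y hy => ?_⟩
  obtain ⟨c, hc, hyc⟩ := mem_thickening_iff.1 hy
  have hr : 0 < r := dist_nonneg.trans_lt hyc
  refine ⟨K ∪ ball c r, union_subset hKC (ball_subset_thickening hc r), Or.inl hp, Or.inr hyc,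
    hK.isPreconnected.union c (hCK hc) (mem_ball_self hr) (convex_ball c r).isPreconnected⟩

end UnionOfBalls

theorem isLipschitzDomain_thickening {C : Set E2} (hC : C.Finite) {r : ℝ}
    (hr : ¬IsCriticalRadius C r) (hconn : IsConnected (thickening r C)) :
    IsLipschitzDomain (thickening r C) :=
  ⟨isOpen_thickening, hconn, hC.isBounded.thickening, fun _ hx =>
    (hasUniformInnerConeAt_thickening hC hr hx).isLocallyLipschitzSubgraph isOpen_thickening
      (frontier_subset_closure hx)⟩

theorem exists_isLipschitzDomain_closure_subset {K : Set E2} (hK : IsCompact K)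
    (hKc : IsConnected K) {U : Set E2} (hU : U ∈ 𝓝ˢ K) :
    ∃ V ∈ 𝓝ˢ K, IsLipschitzDomain V ∧ closure V ⊆ U := by
  obtain ⟨η, hη, hηU⟩ := (hasBasis_nhdsSet_thickening hK).mem_iff.1 hU
  obtain ⟨C, hCK, hC, hcover⟩ := hK.finite_cover_balls (half_pos hη)
  obtain ⟨r, ⟨hηr, hrη⟩, hcrit⟩ := ((Ioo_infinite (half_lt_self hη)).sdiff
    (finite_setOf_isCriticalRadius hC)).nonempty
  have hKC : K ⊆ thickening r C := by
    rw [← thickening_eq_biUnion_ball] at hcover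
    exact hcover.trans (thickening_mono hηr.le C)
  refine ⟨thickening r C, isOpen_thickening.mem_nhdsSet.2 hKC,
    isLipschitzDomain_thickening hC hcrit (isConnected_thickening_of_subset hKc hCK hKC), ?_⟩
  calc closure (thickening r C) ⊆ cthickening r C := closure_thickening_subset_cthickening r C
    _ ⊆ thickening η C := cthickening_subset_thickening' hη hrη C
    _ ⊆ thickening η K := thickening_subset_of_subset η hCK
    _ ⊆ U := hηU

theorem stmt18_general {K : Set E2} (hK : IsCompact K) (hKc : IsConnected K) :
    ∃ G : ℕ → Set E2, (∀ s, IsLipschitzDomain (G s)) ∧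
      (∀ s, K ⊆ G (s + 1) ∧ closure (G (s + 1)) ⊆ G s) ∧
      Tendsto (fun s => hausdorffDist (frontier (G s)) (frontier K)) atTop (𝓝 0) := by
  have := isCountablyGenerated_nhdsSet_of_isCompact hK
  obtain ⟨G, hLip, hGK, hcl, hlim⟩ := exists_seq_closure_subset_tendsto_smallSets
    fun U hU => exists_isLipschitzDomain_closure_subset hK hKc hU
  have hKG : ∀ s, K ⊆ G s := fun s => subset_of_mem_nhdsSet (hGK s)
  exact ⟨G, hLip, fun s => ⟨hKG (s + 1), hcl s⟩,
    tendsto_hausdorffDist_frontier hK (fun s => (hLip s).1) hKG hlim⟩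

/-- every Jordan domain `Ω` admits a decreasing sequence of Lipschitz
domains `G_s` with `Ω ⊂⊂ G_{s+1} ⊂⊂ G_s` and `dist_H(∂G_s, ∂Ω) → 0`. -/
theorem stmt18 (Ω : Set E2) (hΩ : IsJordanDomain Ω) :
    ∃ G : ℕ → Set E2, (∀ s, IsLipschitzDomain (G s)) ∧
      (∀ s, closure Ω ⊆ G (s + 1) ∧ closure (G (s + 1)) ⊆ G s) ∧
      Tendsto (fun s => Metric.hausdorffDist (frontier (G s)) (frontier Ω))
        atTop (nhds 0) :=
  hΩ.frontier_closure ▸ stmt18_general hΩ.isBounded.isCompact_closure hΩ.isConnected.closure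
end
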